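/- arXiv:0809.2651 — 3 statements merged into one kernel-verified Lean document; each statement's English description precedes it below -/
import Mathlib

section
/- Let P be a finite nonempty set of points in the Euclidean plane ℝ², K the convex hull of P, Q a line with Q ∩ K nonempty, and let q ∈ Q ∩ K satisfy F(q) ≥ F(x) for all x ∈ Q ∩ K (q is the center of the largest empty circle centered on Q). Then either q lies on the frontier (topological boundary) of K, or there exist two distinct points p₁, p₂ ∈ P with dist(q,p₁) = dist(q,p₂) = F(q); that is, the center of the LEC lies either on the convex hull boundary or on a Voronoi edge of P. -/
/-!
If `q` is not on the frontier of `K`, it is interior to `K`, so the distance to the nearest site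
has a local maximum at `q` on the whole of `Q`, not just on `Q ∩ K`. If moreover `q` has only one
nearest site `p`, then `p` remains the nearest site of all points near `q`, so the distance to the
single point `p` has a local maximum on `Q` at `q`. This is impossible: in a strictly convex space,
the midpoint of a nondegenerate segment is closer to `p` than one of the two endpoints.
-/

open Bornology Filter Metric Set Topology

section NearestSite

variable {α : Type*} [PseudoMetricSpace α] {S : Set α}

/-- The points lying on a Voronoi edge of the set `S` of sites: those with at least two distinct
nearest sites. Voronoi vertices, having three or more nearest sites, are included. -/
def voronoiEdges (S : Set α) : Set α :=
  {x | ∃ p₁ ∈ S, ∃ p₂ ∈ S, p₁ ≠ p₂ ∧ dist x p₁ = infDist x S ∧ dist x p₂ = infDist x S}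

theorem infDist_eq_dist_of_forall_dist_le {x p : α} (hp : p ∈ S)
    (hmin : ∀ p' ∈ S, dist x p ≤ dist x p') : infDist x S = dist x p :=
  (infDist_le_dist_of_mem hp).antisymm ((le_infDist ⟨p, hp⟩).2 fun {p'} ↦ hmin p')

theorem finset_inf'_dist_eq_infDist (P : Finset α) (hP : P.Nonempty) (x : α) :
    P.inf' hP (fun p ↦ dist x p) = infDist x P := by
  obtain ⟨p, hp, hinf⟩ := P.exists_mem_eq_inf' hP (fun p ↦ dist x p)
  rw [hinf, infDist_eq_dist_of_forall_dist_le (Finset.mem_coe.2 hp)]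
  exact fun p' hp' ↦ hinf ▸ Finset.inf'_le _ hp'

theorem exists_infDist_eq_dist_of_finite_inter (hS : S.Nonempty)
    (hfin : ∀ s, IsBounded s → (S ∩ s).Finite) (x : α) : ∃ p ∈ S, infDist x S = dist x p := by
  obtain ⟨p₀, hp₀⟩ := hS
  have hp₀_mem : p₀ ∈ S ∩ closedBall x (dist x p₀) := ⟨hp₀, (dist_comm p₀ x).le⟩
  obtain ⟨p, hp, hmin⟩ := exists_min_image _ (dist x) (hfin _ isBounded_closedBall) ⟨p₀, hp₀_mem⟩
  refine ⟨p, hp.1, infDist_eq_dist_of_forall_dist_le hp.1 fun p' hp' ↦ ?_⟩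
  rcases le_total (dist x p') (dist x p₀) with hnear | hfar
  · exact hmin p' ⟨hp', mem_closedBall'.2 hnear⟩
  · exact (hmin p₀ hp₀_mem).trans hfar

theorem eventuallyEq_infDist_dist (hfin : ∀ s, IsBounded s → (S ∩ s).Finite) {x p : α}
    (hp : p ∈ S) (hlt : ∀ p' ∈ S, p' ≠ p → dist x p < dist x p') :
    (infDist · S) =ᶠ[𝓝 x] (dist · p) := by
  -- Separated because `infDist x ∅ = 0`, so `hgap` fails when `p` is the only site.
  rcases (S \ {p}).eq_empty_or_nonempty with hempty | hne
  · obtain rfl : S = {p} := (sdiff_eq_empty.1 hempty).antisymm (singleton_subset_iff.2 hp)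
    exact .of_forall fun _ ↦ infDist_singleton
  have hgap : dist x p < infDist x (S \ {p}) := by
    obtain ⟨p', hp', heq⟩ := exists_infDist_eq_dist_of_finite_inter hne
      (fun s hs ↦ (hfin s hs).subset (inter_subset_inter_left s sdiff_subset)) x
    exact heq ▸ hlt p' hp'.1 hp'.2
  have hgap_near : ∀ᶠ y in 𝓝 x, dist y p < infDist y (S \ {p}) :=
    (continuous_id.dist continuous_const).continuousAt.eventually_lt
      (continuous_infDist_pt _).continuousAt hgap
  filter_upwards [hgap_near] with y hy
  refine infDist_eq_dist_of_forall_dist_le hp fun p' hp' ↦ ?_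
  by_cases hpp' : p' = p
  · exact hpp' ▸ le_rfl
  · exact hy.le.trans (infDist_le_dist_of_mem ⟨hp', hpp'⟩)

theorem exists_eventuallyEq_infDist_dist_of_notMem_voronoiEdges (hS : S.Nonempty)
    (hfin : ∀ s, IsBounded s → (S ∩ s).Finite) {x : α} (hx : x ∉ voronoiEdges S) :
    ∃ p ∈ S, (infDist · S) =ᶠ[𝓝 x] (dist · p) := by
  obtain ⟨p, hp, hpx⟩ := exists_infDist_eq_dist_of_finite_inter hS hfin x
  refine ⟨p, hp, eventuallyEq_infDist_dist hfin hp fun p' hp' hne ↦ ?_⟩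
  rw [← hpx]
  refine (infDist_le_dist_of_mem hp').lt_of_ne fun hp'x ↦ hx ?_
  exact ⟨p, hp, p', hp', hne.symm, hpx.symm, hp'x.symm⟩

end NearestSite

theorem sbtw_neg_vadd_vadd {R V X : Type*} [Field R] [LinearOrder R] [IsStrictOrderedRing R]
    [AddCommGroup V] [Module R V] [AddTorsor V X] {w : V} (hw : w ≠ 0) (q : X) :
    Sbtw R (-w +ᵥ q) q (w +ᵥ q) := by
  have hne : q ≠ -w +ᵥ q := by simpa [eq_vadd_iff_vsub_eq] using hw
  simpa only [AffineEquiv.pointReflection_apply, vsub_vadd_eq_vsub_sub, vsub_self, zero_sub,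
    neg_neg] using sbtw_pointReflection_of_ne R hne

section StrictConvex

variable {V X : Type*} [NormedAddCommGroup V] [NormedSpace ℝ V] [StrictConvexSpace ℝ V]
  [PseudoMetricSpace X] [NormedAddTorsor V X]

theorem not_isLocalMax_dist_smul_vadd {v : V} (hv : v ≠ 0) (q p : X) :
    ¬ IsLocalMax (fun t : ℝ ↦ dist (t • v +ᵥ q) p) 0 := by
  intro hmax
  have hmax_neg : ∀ᶠ t : ℝ in 𝓝 0, dist (-t • v +ᵥ q) p ≤ dist ((0 : ℝ) • v +ᵥ q) p :=
    (continuous_neg.tendsto' (0 : ℝ) 0 neg_zero).eventually hmax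
  obtain ⟨t, ⟨hpos, hneg⟩, ht⟩ :=
    (((hmax.and hmax_neg).filter_mono nhdsWithin_le_nhds).and
      (eventually_mem_nhdsWithin (a := (0 : ℝ)) (s := {0}ᶜ))).exists
  have hlt := (sbtw_neg_vadd_vadd (smul_ne_zero ht hv) q).dist_lt_max_dist p
  simp only [zero_smul, zero_vadd, neg_smul] at hpos hneg
  exact hlt.not_ge (max_le hneg hpos)

theorem not_isLocalMaxOn_dist {Q : AffineSubspace ℝ X} (hQ : Q.direction ≠ ⊥) {q : X}
    (hq : q ∈ Q) (p : X) : ¬ IsLocalMaxOn (dist · p) Q q := by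
  intro hmax
  obtain ⟨v, hvQ, hv⟩ := Q.direction.exists_mem_ne_zero_of_ne_bot hQ
  have hline : Tendsto (fun t : ℝ ↦ t • v +ᵥ q) (𝓝 0) (𝓝[Q] q) :=
    tendsto_nhdsWithin_iff.2 ⟨Continuous.tendsto' (by fun_prop) _ _ (by simp),
      .of_forall fun t ↦ Q.vadd_mem_of_mem_direction (Q.direction.smul_mem t hvQ) hq⟩
  refine not_isLocalMax_dist_smul_vadd hv q p ?_
  simpa [IsLocalMax, IsMaxFilter] using hline.eventually hmax

theorem stmt1_general {S : Set X} (hS : S.Nonempty) (hfin : ∀ s, IsBounded s → (S ∩ s).Finite)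
    {Q : AffineSubspace ℝ X} (hQ : Q.direction ≠ ⊥) {K : Set X} {q : X} (hq : q ∈ (Q : Set X) ∩ K)
    (hmax : IsLocalMaxOn (infDist · S) ((Q : Set X) ∩ K) q) :
    q ∈ frontier K ∨ q ∈ voronoiEdges S := by
  by_contra! ⟨hfrontier, hvoronoi⟩
  have hK : K ∈ 𝓝 q := by
    rw [← mem_interior_iff_mem_nhds]
    exact by_contra fun hint ↦ hfrontier ⟨subset_closure hq.2, hint⟩
  have hmaxQ : IsLocalMaxOn (infDist · S) Q q := by
    rwa [IsLocalMaxOn, nhdsWithin_inter_of_mem' (mem_nhdsWithin_of_mem_nhds hK)] at hmax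
  obtain ⟨p, -, hp⟩ := exists_eventuallyEq_infDist_dist_of_notMem_voronoiEdges hS hfin hvoronoi
  exact not_isLocalMaxOn_dist hQ hq.1 p (hmaxQ.congr (hp.filter_mono nhdsWithin_le_nhds) hq.1)

end StrictConvex

theorem setOf_eq_add_smul_eq_mk' {k V : Type*} [Ring k] [AddCommGroup V] [Module k V] (q₀ v : V) :
    {x | ∃ t : k, x = q₀ + t • v} = (AffineSubspace.mk' q₀ (k ∙ v) : Set V) := by
  ext x
  simp [AffineSubspace.mem_mk', Submodule.mem_span_singleton, eq_sub_iff_add_eq', eq_comm]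

/-- The center of the largest empty circle centered on a query line lies
either on the frontier of the convex hull `K` of `P`, or on a Voronoi edge of `P`
(i.e. two distinct points of `P` are simultaneously nearest to it). -/
theorem stmt1 (P : Finset (EuclideanSpace ℝ (Fin 2))) (hP : P.Nonempty)
    (q₀ v : EuclideanSpace ℝ (Fin 2)) (hv : v ≠ 0)
    (Q : Set (EuclideanSpace ℝ (Fin 2))) (hQ : Q = {x | ∃ t : ℝ, x = q₀ + t • v})
    (K : Set (EuclideanSpace ℝ (Fin 2))) (hK : K = convexHull ℝ (P : Set (EuclideanSpace ℝ (Fin 2))))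
    (F : EuclideanSpace ℝ (Fin 2) → ℝ) (hF : ∀ x, F x = P.inf' hP (fun p => dist x p))
    (q : EuclideanSpace ℝ (Fin 2)) (hq : q ∈ Q ∩ K)
    (hmax : ∀ x ∈ Q ∩ K, F x ≤ F q) :
    q ∈ frontier K ∨
      ∃ p₁ ∈ P, ∃ p₂ ∈ P, p₁ ≠ p₂ ∧ dist q p₁ = F q ∧ dist q p₂ = F q := by
  simp only [hF, finset_inf'_dist_eq_infDist, hQ, setOf_eq_add_smul_eq_mk'] at hq hmax ⊢
  exact stmt1_general hP (fun s _ ↦ P.finite_toSet.inter_of_left s) (by simpa using hv) hq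
    (IsMaxOn.localize hmax)
end

section
/- Let P be a finite nonempty set of points in the Euclidean plane ℝ², K the convex hull of P, and Q a line. Suppose q lies in Q and in the interior of K, and q is a local maximizer of F along Q, i.e. there is ε > 0 such that F(q) ≥ F(x) for all x ∈ Q with dist(x,q) < ε. Then there exist two distinct points p₁, p₂ ∈ P with dist(q,p₁) = dist(q,p₂) = F(q), i.e. q lies on a Voronoi edge of P. -/
/-!
Suppose only one point `p` of `P` is nearest to `q`. The other points of `P` stay strictly farther
away on a whole neighbourhood of `q`, so there the distance to `P` is just the distance to `p`. But
if `q` is the midpoint of two distinct points, strict convexity makes one of them farther from `p`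
than `q` is; choosing them on the line and close to `q` contradicts local maximality.
-/

open Filter Metric Topology
open AffineEquiv (pointReflection)

section NearestPoints

variable {X : Type*} [PseudoMetricSpace X]

/-- The points of `s` at which the distance from `x` to `s` is attained. For a set `s` of sites,
the Voronoi edges consist of the `x` for which this set has at least two elements. -/
def nearestPoints (s : Set X) (x : X) : Set X :=
  {p ∈ s | dist x p = infDist x s}

variable {s : Set X} {x : X} {r : ℝ}

theorem nearestPoints_nonempty (hr : infDist x s < r)
    (hfin : (s ∩ ball x r).Finite) (hs : s.Nonempty) : (nearestPoints s x).Nonempty := by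
  obtain ⟨y, hys, hyr⟩ := (infDist_lt_iff hs).1 hr
  obtain ⟨p, ⟨hps, hpr⟩, hmin⟩ :=
    hfin.exists_minimalFor (dist x) _ ⟨y, hys, mem_ball'.2 hyr⟩
  refine ⟨p, hps, le_antisymm ((le_infDist hs).2 fun z hz ↦ ?_) (infDist_le_dist_of_mem hps)⟩
  rcases lt_or_ge (dist x z) r with hzr | hzr
  · exact (le_total _ _).elim id (hmin ⟨hz, mem_ball'.2 hzr⟩)
  · exact (mem_ball'.1 hpr).le.trans hzr

theorem infDist_eventuallyEq_dist {p : X} (hp : nearestPoints s x = {p})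
    (hr : infDist x s < r) (hfin : (s ∩ ball x r).Finite) :
    (infDist · s) =ᶠ[𝓝 x] (dist · p) := by
  obtain ⟨hps, hpx⟩ : p ∈ nearestPoints s x := hp ▸ rfl
  have hclose : ∀ z ∈ s ∩ ball x r, ∀ᶠ y in 𝓝 x, dist y p ≤ dist y z := by
    rintro z ⟨hzs, -⟩
    rcases eq_or_ne z p with rfl | hzp
    · exact .of_forall fun _ ↦ le_rfl
    have hz : z ∉ nearestPoints s x := hp ▸ hzp
    have hlt : dist x p < dist x z :=
      hpx ▸ (infDist_le_dist_of_mem hzs).lt_of_ne fun h ↦ hz ⟨hzs, h.symm⟩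
    have hcont (w : X) : Tendsto (dist · w) (𝓝 x) (𝓝 (dist x w)) :=
      (continuous_id.dist continuous_const).tendsto x
    exact ((hcont p).eventually_lt (hcont z) hlt).mono fun _ ↦ le_of_lt
  have hfar : ∀ᶠ y in 𝓝 x, dist y p + dist y x < r := by
    have hcont : Continuous fun y ↦ dist y p + dist y x := by fun_prop
    exact hcont.continuousAt.eventually_lt_const (by simpa [hpx] using hr)
  filter_upwards [(eventually_all_finite hfin).2 hclose, hfar] with y hclose hfar
  refine le_antisymm (infDist_le_dist_of_mem hps) ((le_infDist ⟨p, hps⟩).2 fun z hz ↦ ?_)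
  rcases lt_or_ge (dist x z) r with hzr | hzr
  · exact hclose z ⟨hz, mem_ball'.2 hzr⟩
  · linarith [dist_triangle_left x z y]

theorem inf'_dist_eq_infDist (s : Finset X) (hs : s.Nonempty) (x : X) :
    s.inf' hs (dist x) = infDist x s := by
  rw [infDist_eq_iInf, Finset.inf'_eq_csInf_image, sInf_image']

end NearestPoints

section AffineSubspace

variable {k V X : Type*} [AddCommGroup V] [AddTorsor V X]

theorem setOf_eq_add_smul_eq_affineSpan_pair [Ring k] [Module k V] (q₀ v : V) :
    {x | ∃ t : k, x = q₀ + t • v} = (line[k, q₀, q₀ + v] : Set V) := by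
  ext x
  simp [mem_affineSpan_pair_iff_exists_lineMap_eq, AffineMap.lineMap_apply, eq_comm, add_comm]

theorem mapsTo_pointReflection_affineSubspace [Ring k] [Module k V] {Q : AffineSubspace k X}
    {q : X} (hq : q ∈ Q) : Set.MapsTo (pointReflection k q) Q Q := fun _ hx ↦
  AffineSubspace.vadd_mem_of_mem_direction (AffineSubspace.vsub_mem_direction hq hx) hq

theorem accPt_affineSubspace [DivisionRing k] [Module k V] [TopologicalSpace k]
    [(𝓝[≠] (0 : k)).NeBot] [TopologicalSpace V] [ContinuousSMul k V] [TopologicalSpace X]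
    [IsTopologicalAddTorsor X]
    {Q : AffineSubspace k X} (hQ : (Q : Set X).Nontrivial) {q : X} (hq : q ∈ Q) :
    AccPt q (𝓟 (Q : Set X)) := by
  obtain ⟨y, hy, hyq⟩ := hQ.exists_ne q
  have htendsto : Tendsto (AffineMap.lineMap q y : k → X) (𝓝[≠] 0) (𝓝 q) := by
    have hcont : Continuous (AffineMap.lineMap q y : k → X) := AffineMap.lineMap_continuous
    simpa using (hcont.tendsto 0).mono_left nhdsWithin_le_nhds
  refine accPt_iff_frequently.2 (htendsto.frequently (Eventually.frequently ?_))
  filter_upwards [self_mem_nhdsWithin] with t ht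
  exact ⟨by simpa [hyq.symm] using ht, AffineMap.lineMap_mem t hq hy⟩

end AffineSubspace

section StrictConvex

variable {V X : Type*} [NormedAddCommGroup V] [NormedSpace ℝ V] [MetricSpace X]
  [NormedAddTorsor V X] [StrictConvexSpace ℝ V]

theorem not_isLocalMaxOn_dist_s2 {s : Set X} {q : X}
    (hsymm : Set.MapsTo (pointReflection ℝ q) s s) (hacc : AccPt q (𝓟 s)) (p : X) :
    ¬ IsLocalMaxOn (dist · p) s q := by
  intro hmax
  have hmax' : ∀ᶠ x in 𝓝 q, x ∈ s → dist x p ≤ dist q p := eventually_nhdsWithin_iff.1 hmax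
  have hrefl : Tendsto (pointReflection ℝ q) (𝓝 q) (𝓝 q) := by
    have hcont := (ContinuousAffineEquiv.pointReflection ℝ q).continuous
    exact hcont.tendsto' q q (ContinuousAffineEquiv.pointReflection_self ℝ q)
  obtain ⟨x, ⟨hxq, hxs⟩, hle, hle'⟩ :=
    ((accPt_iff_frequently.1 hacc).and_eventually (hmax'.and (hrefl.eventually hmax'))).exists
  have hlt : dist q p < max (dist x p) (dist (pointReflection ℝ q x) p) :=
    (sbtw_pointReflection_of_ne ℝ hxq.symm).dist_lt_max_dist p
  exact hlt.not_ge (max_le (hle hxs) (hle' (hsymm hxs)))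

theorem stmt2_general {P : Set X} (hP : P.Nonempty)
    {Q : AffineSubspace ℝ X} (hQ : (Q : Set X).Nontrivial) {q : X} (hq : q ∈ Q)
    {r : ℝ} (hr : infDist q P < r) (hfin : (P ∩ ball q r).Finite)
    (hloc : IsLocalMaxOn (infDist · P) Q q) :
    (nearestPoints P q).Nontrivial := by
  by_contra hsub
  obtain ⟨p, hp⟩ : ∃ p, nearestPoints P q = {p} :=
    (Set.not_nontrivial_iff.1 hsub).eq_empty_or_singleton.resolve_left
      (nearestPoints_nonempty hr hfin hP).ne_empty
  have hdist : (infDist · P) =ᶠ[𝓝 q] (dist · p) := infDist_eventuallyEq_dist hp hr hfin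
  refine not_isLocalMaxOn_dist_s2 (mapsTo_pointReflection_affineSubspace hq)
    (accPt_affineSubspace hQ hq) p ?_
  exact hloc.congr (hdist.filter_mono nhdsWithin_le_nhds) hq

end StrictConvex

/-- A local maximizer of the nearest-point distance `F` along a line `Q`,
lying in the interior of the convex hull `K` of `P`, lies on a Voronoi edge of `P`:
two distinct points of `P` are simultaneously nearest to it. -/
theorem stmt2 (P : Finset (EuclideanSpace ℝ (Fin 2))) (hP : P.Nonempty)
    (q₀ v : EuclideanSpace ℝ (Fin 2)) (hv : v ≠ 0)
    (Q : Set (EuclideanSpace ℝ (Fin 2))) (hQ : Q = {x | ∃ t : ℝ, x = q₀ + t • v})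
    (K : Set (EuclideanSpace ℝ (Fin 2))) (hK : K = convexHull ℝ (P : Set (EuclideanSpace ℝ (Fin 2))))
    (F : EuclideanSpace ℝ (Fin 2) → ℝ) (hF : ∀ x, F x = P.inf' hP (fun p => dist x p))
    (q : EuclideanSpace ℝ (Fin 2)) (hqQ : q ∈ Q) (hqK : q ∈ interior K)
    (ε : ℝ) (hε : 0 < ε)
    (hloc : ∀ x ∈ Q, dist x q < ε → F x ≤ F q) :
    ∃ p₁ ∈ P, ∃ p₂ ∈ P, p₁ ≠ p₂ ∧ dist q p₁ = F q ∧ dist q p₂ = F q := by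
  obtain rfl : F = (infDist · P) := funext fun x ↦ (hF x).trans (inf'_dist_eq_infDist P hP x)
  obtain rfl : Q = line[ℝ, q₀, q₀ + v] := hQ.trans (setOf_eq_add_smul_eq_affineSpan_pair q₀ v)
  have hline : (line[ℝ, q₀, q₀ + v] : Set (EuclideanSpace ℝ (Fin 2))).Nontrivial :=
    ⟨q₀, left_mem_affineSpan_pair ℝ q₀ _, q₀ + v, right_mem_affineSpan_pair ℝ q₀ _, by simpa⟩
  have hmax : IsLocalMaxOn (infDist · (P : Set _)) line[ℝ, q₀, q₀ + v] q :=
    mem_nhdsWithin_iff.2 ⟨ε, hε, fun x hx ↦ hloc x hx.2 hx.1⟩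
  obtain ⟨p₁, ⟨hp₁, hd₁⟩, p₂, ⟨hp₂, hd₂⟩, hne⟩ := stmt2_general hP.to_set hline hqQ
    (lt_add_one _) (P.finite_toSet.inter_of_left _) hmax
  exact ⟨p₁, hp₁, p₂, hp₂, hne, hd₁, hd₂⟩
end

section
/- Let P be a finite nonempty set of points in the Euclidean plane ℝ², K the convex hull of P, and Q a line with Q ∩ K nonempty. Let C be the set consisting of all points of Q on the frontier of K together with all points x ∈ Q ∩ K for which there exist distinct p₁, p₂ ∈ P with dist(x,p₁) = dist(x,p₂) = F(x). Then C is nonempty and the supremum of F over Q ∩ K equals the supremum of F over C; i.e., the radius of the largest empty circle centered on Q is realized at an intersection of Q with the convex hull boundary or with a Voronoi edge. -/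
/-!
A maximizer `x` of the nearest-point distance over `Q ∩ K` that is interior to `K` and has a unique
nearest site `p` would be a local maximizer on `Q` of `dist · p`, because with finitely many sites
`p` stays the nearest one near `x`. By strict convexity this is impossible: of two points of `Q`
symmetric about `x`, one is farther from `p` than `x` is. Hence every maximizer, and one exists by
compactness, already lies in the candidate set.
-/

open AffineEquiv Filter Metric Topology

section PseudoMetricSpace

variable {X : Type*} [PseudoMetricSpace X]

/-- The union of the Voronoi edges of a set `P` of sites: the points at which two distinct sites
are simultaneously nearest (Voronoi vertices included). Away from the frontier of the convex hull,
only these points can be centers of largest empty circles on a line. -/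
def voronoiSkeleton (P : Set X) : Set X :=
  {x | ∃ p₁ ∈ P, ∃ p₂ ∈ P, p₁ ≠ p₂ ∧ dist x p₁ = infDist x P ∧ dist x p₂ = infDist x P}

theorem infDist_coe_finset (P : Finset X) (hP : P.Nonempty) (x : X) :
    infDist x P = P.inf' hP (dist x) :=
  eq_of_forall_le_iff fun r => by simp [le_infDist (Finset.coe_nonempty.2 hP)]

theorem dist_lt_dist_of_notMem_voronoiSkeleton {P : Set X} {x p q : X}
    (hx : x ∉ voronoiSkeleton P) (hp : p ∈ P) (hxp : infDist x P = dist x p)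
    (hq : q ∈ P) (hqp : q ≠ p) : dist x p < dist x q :=
  hxp ▸ (infDist_le_dist_of_mem hq).lt_of_ne fun hxq =>
    hx ⟨p, hp, q, hq, hqp.symm, hxp.symm, hxq.symm⟩

theorem infDist_eventuallyEq_dist_s3 {P : Set X} (hP : P.Finite) {x p : X}
    (hx : x ∉ voronoiSkeleton P) (hp : p ∈ P) (hxp : infDist x P = dist x p) :
    (infDist · P) =ᶠ[𝓝 x] (dist · p) := by
  have hnear : ∀ᶠ y in 𝓝 x, ∀ q ∈ P, dist y p ≤ dist y q := by
    refine (eventually_all_finite hP).2 fun q hq => ?_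
    obtain rfl | hqp := eq_or_ne q p
    · exact .of_forall fun _ => le_rfl
    · have hlt := dist_lt_dist_of_notMem_voronoiSkeleton hx hp hxp hq hqp
      have hcont (r : X) : ContinuousAt (dist · r) x := by fun_prop
      exact ((hcont p).eventually_lt (hcont q) hlt).mono fun _ => le_of_lt
  filter_upwards [hnear] with y hy
  exact (infDist_le_dist_of_mem hp).antisymm ((le_infDist ⟨p, hp⟩).2 hy)

end PseudoMetricSpace

theorem coe_affineSpan_pair_self_add {k V : Type*} [Ring k] [AddCommGroup V] [Module k V]
    (q v : V) : (line[k, q, q + v] : Set V) = {x | ∃ t : k, x = q + t • v} := by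
  ext x
  simp [mem_affineSpan_pair_iff_exists_lineMap_eq, AffineMap.lineMap_apply,
    add_comm q, eq_comm (a := x)]

section NormedSpace

variable {E : Type*} [NormedAddCommGroup E] [NormedSpace ℝ E]

theorem tendsto_pointReflection_nhdsWithin {Q : AffineSubspace ℝ E} {x : E} (hx : x ∈ Q) :
    Tendsto (pointReflection ℝ x) (𝓝[Q] x) (𝓝[Q] x) := by
  have hmaps : Set.MapsTo (pointReflection ℝ x) Q Q := fun y hy =>
    AffineSubspace.vadd_mem_of_mem_direction (Q.vsub_mem_direction hx hy) hx
  have hcont : Continuous (pointReflection ℝ x) :=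
    (AffineIsometryEquiv.pointReflection ℝ x).continuous
  simpa using (hcont.continuousWithinAt (x := x)).tendsto_nhdsWithin hmaps

variable [StrictConvexSpace ℝ E] {Q : AffineSubspace ℝ E} {x : E}

theorem not_isLocalMaxOn_dist_s3 (hQ : (Q : Set E).Nontrivial) (hx : x ∈ Q) (p : E) :
    ¬ IsLocalMaxOn (dist · p) Q x := by
  intro hmax
  have hacc : (𝓝[(Q : Set E) \ {x}] x).NeBot := accPt_principal_iff_nhdsWithin.1
    (Q.convex.isPreconnected.preperfect_of_nontrivial hQ x hx)
  have hsymm : ∀ᶠ y in 𝓝[(Q : Set E) \ {x}] x,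
      dist y p ≤ dist x p ∧ dist (pointReflection ℝ x y) p ≤ dist x p :=
    nhdsWithin_mono x Set.sdiff_subset
      (hmax.and ((tendsto_pointReflection_nhdsWithin hx).eventually hmax))
  obtain ⟨y, ⟨hy, hy'⟩, -, hyx⟩ := (hsymm.and self_mem_nhdsWithin).exists
  exact ((sbtw_pointReflection_of_ne ℝ (Ne.symm hyx)).dist_lt_max_dist p).not_ge (max_le hy hy')

theorem not_isLocalMaxOn_infDist {P : Set E} (hPfin : P.Finite) (hP : P.Nonempty)
    (hQ : (Q : Set E).Nontrivial) (hxQ : x ∈ Q) (hx : x ∉ voronoiSkeleton P) :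
    ¬ IsLocalMaxOn (infDist · P) Q x := by
  obtain ⟨p, hp, hxp⟩ := hPfin.isCompact.exists_infDist_eq_dist hP x
  have heq : (infDist · P) =ᶠ[𝓝[Q] x] (dist · p) :=
    (infDist_eventuallyEq_dist_s3 hPfin hx hp hxp).filter_mono nhdsWithin_le_nhds
  exact mt (heq.isLocalMaxOn_iff hxQ).1 (not_isLocalMaxOn_dist_s3 hQ hxQ p)

theorem mem_frontier_or_mem_voronoiSkeleton_of_isMaxOn {P K : Set E} (hPfin : P.Finite)
    (hP : P.Nonempty) (hQ : (Q : Set E).Nontrivial) (hx : x ∈ (Q : Set E) ∩ K)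
    (hmax : IsMaxOn (infDist · P) (Q ∩ K) x) : x ∈ frontier K ∨ x ∈ voronoiSkeleton P := by
  by_contra! hnot
  have hint : x ∈ interior K := self_sdiff_frontier K ▸ ⟨hx.2, hnot.1⟩
  have hlocal : IsLocalMaxOn (infDist · P) Q x := by
    simpa only [IsLocalMaxOn, nhdsWithin_inter_of_mem'
      (mem_nhdsWithin_of_mem_nhds (mem_interior_iff_mem_nhds.1 hint))] using hmax.localize
  exact not_isLocalMaxOn_infDist hPfin hP hQ hx.1 hnot.2 hlocal

theorem stmt3_general {P K C : Set E} (hPfin : P.Finite) (hP : P.Nonempty)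
    (hQ : (Q : Set E).Nontrivial) (hQclosed : IsClosed (Q : Set E)) (hK : IsCompact K)
    (hQK : ((Q : Set E) ∩ K).Nonempty)
    (hC : C = ((Q : Set E) ∩ frontier K) ∪ {x ∈ (Q : Set E) ∩ K | x ∈ voronoiSkeleton P}) :
    C.Nonempty ∧ sSup ((infDist · P) '' (Q ∩ K)) = sSup ((infDist · P) '' C) := by
  obtain ⟨x, hx, hmax⟩ := (hK.inter_left hQclosed).exists_isMaxOn hQK
    (continuous_infDist_pt P).continuousOn
  have hxC : x ∈ C := hC ▸
    (mem_frontier_or_mem_voronoiSkeleton_of_isMaxOn hPfin hP hQ hx hmax).imp (⟨hx.1, ·⟩) (⟨hx, ·⟩)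
  have hCsub : C ⊆ Q ∩ K := hC ▸ Set.union_subset
    (Set.inter_subset_inter_right _ hK.isClosed.frontier_subset) (Set.sep_subset _ _)
  have hsup := (hmax.isLUB hx).csSup_eq (hQK.image _)
  have hsupC := ((hmax.on_subset hCsub).isLUB hxC).csSup_eq (Set.Nonempty.image _ ⟨x, hxC⟩)
  exact ⟨⟨x, hxC⟩, hsup.trans hsupC.symm⟩

end NormedSpace

/-- The radius of the largest empty circle centered on a query line `Q`
is realized at an intersection of `Q` with the frontier of the convex hull or with a
Voronoi edge: the set `C` of such candidate points is nonempty, and the supremum of the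
nearest-point distance `F` over `Q ∩ K` equals its supremum over `C`. -/
theorem stmt3 (P : Finset (EuclideanSpace ℝ (Fin 2))) (hP : P.Nonempty)
    (q₀ v : EuclideanSpace ℝ (Fin 2)) (hv : v ≠ 0)
    (Q : Set (EuclideanSpace ℝ (Fin 2))) (hQ : Q = {x | ∃ t : ℝ, x = q₀ + t • v})
    (K : Set (EuclideanSpace ℝ (Fin 2))) (hK : K = convexHull ℝ (P : Set (EuclideanSpace ℝ (Fin 2))))
    (F : EuclideanSpace ℝ (Fin 2) → ℝ) (hF : ∀ x, F x = P.inf' hP (fun p => dist x p))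
    (hQK : (Q ∩ K).Nonempty)
    (C : Set (EuclideanSpace ℝ (Fin 2)))
    (hC : C = (Q ∩ frontier K) ∪
      {x ∈ Q ∩ K | ∃ p₁ ∈ P, ∃ p₂ ∈ P, p₁ ≠ p₂ ∧ dist x p₁ = F x ∧ dist x p₂ = F x}) :
    C.Nonempty ∧ sSup (F '' (Q ∩ K)) = sSup (F '' C) := by
  obtain rfl : F = (infDist · P) := funext fun x => (hF x).trans (infDist_coe_finset P hP x).symm
  obtain rfl := hQ.trans (coe_affineSpan_pair_self_add q₀ v).symm
  exact stmt3_general P.finite_toSet hP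
    ((Set.nontrivial_pair (by simpa using hv)).mono (subset_affineSpan ℝ _))
    (AffineSubspace.closed_of_finiteDimensional _)
    (hK ▸ P.finite_toSet.isCompact_convexHull ℝ) hQK hC
end
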